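/- For any non-empty graph H (a finite simple graph with at least one edge), the limit as n tends to infinity of rwsat(n, H)/n exists. -/

import Mathlib

open SimpleGraph

/-- The edge-colored graph `(G, c)` contains a rainbow copy of `H`
passing through the edge `e`. -/
def IsRainbowCopyThrough {W V : Type*} (H : SimpleGraph W) (G : SimpleGraph V)
    (c : Sym2 V → ℕ) (e : Sym2 V) : Prop :=
  ∃ f : W → V, Function.Injective f ∧
    (∀ ⦃a b⦄, H.Adj a b → G.Adj (f a) (f b)) ∧
    (∀ ⦃a b a' b'⦄, H.Adj a b → H.Adj a' b' →
      c s(f a, f b) = c s(f a', f b') → s(a, b) = s(a', b')) ∧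
    ∃ a b, H.Adj a b ∧ e = s(f a, f b)

/-- The edge-colored graph `(G, c)` is weakly `H`-rainbow saturated: there is an
ordering `L` of the non-edges of `G` such that for every list `cs` of pairwise
distinct colors, adding the non-edges one at a time (the `i`-th one in color `cs i`)
always creates a new rainbow copy of `H` through the added edge. -/
def WeaklyRainbowSat {W V : Type*} [DecidableEq V] (H : SimpleGraph W)
    (G : SimpleGraph V) (c : Sym2 V → ℕ) : Prop :=
  ∃ L : List (Sym2 V), L.Nodup ∧ (∀ e, e ∈ L ↔ e ∈ Gᶜ.edgeSet) ∧
    ∀ cs : List ℕ, cs.length = L.length → cs.Nodup →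
      ∀ i : Fin L.length,
        IsRainbowCopyThrough H
          (G ⊔ SimpleGraph.fromEdgeSet {e | e ∈ L.take ((i : ℕ) + 1)})
          (((L.zip cs).take ((i : ℕ) + 1)).foldl
            (fun c' p => Function.update c' p.1 p.2) c)
          (L.get i)

/-- The weak rainbow saturation number `rwsat(n, H)`: the minimum number of edges
in a weakly `H`-rainbow saturated edge-colored graph on `n` vertices, where by
convention the value is `n.choose 2` if no such graph exists. -/
noncomputable def rwsat {W : Type*} (H : SimpleGraph W) (n : ℕ) : ℕ :=
  sInf ({m | ∃ (G : SimpleGraph (Fin n)) (c : Sym2 (Fin n) → ℕ),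
    WeaklyRainbowSat H G c ∧ G.edgeSet.ncard = m} ∪ {n.choose 2})

/-- `δ'(H)`: the minimum degree among vertices of nonzero degree. -/
noncomputable def minPosDeg {W : Type*} (H : SimpleGraph W) : ℕ :=
  sInf {d | ∃ v, (H.neighborSet v).ncard = d ∧ d ≠ 0}

/-- `A` is contained in `B` as a subgraph (there is an injective graph
homomorphism from `A` to `B`). -/
def ContainsCopy {α β : Type*} (A : SimpleGraph α) (B : SimpleGraph β) : Prop :=
  ∃ f : α → β, Function.Injective f ∧ ∀ ⦃a b⦄, A.Adj a b → B.Adj (f a) (f b)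

/-- The Turán number `ex(N, ℋ)` of the family `ℋ = {H - {u, v} : uv ∈ E(H)}`:
the maximum number of edges of an `N`-vertex graph containing no member of `ℋ`. -/
noncomputable def exFam {W : Type*} (H : SimpleGraph W) (N : ℕ) : ℕ :=
  sSup {m | ∃ G : SimpleGraph (Fin N),
    (∀ u v : W, H.Adj u v → ¬ ContainsCopy (H.induce ({u, v}ᶜ : Set W)) G) ∧
    G.edgeSet.ncard = m}

/-- `f(H)`: the smallest `n` such that for each `N ∈ {n-1, n}` one has
`ex(N, ℋ) ≤ C(N,2) - 2N - 2`. -/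
noncomputable def fH {W : Type*} (H : SimpleGraph W) : ℕ :=
  sInf {n | ∀ N ∈ ({n - 1, n} : Set ℕ),
    (exFam H N : ℤ) ≤ (N.choose 2 : ℤ) - 2 * N - 2}

/-- The coloring `c` is rainbow (injective) on the set `S` of edges. -/
def RainbowOn {V : Type*} (c : Sym2 V → ℕ) (S : Set (Sym2 V)) : Prop :=
  ∀ e₁ ∈ S, ∀ e₂ ∈ S, c e₁ = c e₂ → e₁ = e₂

/-!
Weak rainbow saturation is a bootstrap percolation process: a non-edge is forced at a stage `P` if
it completes a rainbow copy of `H` whatever distinct colors the added edges carry, and forced edges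
stay forced. Hence `(G, c)` is weakly saturated iff `⊤` is the only closed stage.

Two vertices are forced to be adjacent as soon as they have `|W|` common neighbors forming a clique
`T`, provided no two colors conflict in the copy. This holds if the edges of `G` at `T` are rainbow,
because the at most one edge at `T` whose color is that of the new edge can be avoided by trading
one of its ends for an end of the new edge. It also holds if `G` has no edges inside `T` together
with the two vertices, because added edges have distinct colors.

Since `rwsat(n, H) ≤ |W| n`, optimal percolating graphs on `n` and on `m` vertices contain
independent sets whose closed neighborhoods `X` and `Y` have bounded size. Joining `X` and `Y` to a
rainbow clique on `2|W|` new vertices costs boundedly many edges, and makes everything percolate: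
the new clique forces all edges between `X` and `Y`, the independent set in `Y` then forces the rest
of the edges at `X`, and the one in `X` all remaining ones. Thus
`rwsat(n + m + s, H) ≤ rwsat(n, H) + rwsat(m, H) + C` for large `n` and `m`, and Fekete's argument
applies.
-/

/-- `χ` is one of the colorings that can arise while the edge-colored graph `(G, c)` is completed:
it agrees with `c` on the edges of `G`, and the non-edges of `G` receive distinct colors. -/
structure IsRainbowExtension {V : Type*} (G : SimpleGraph V) (c χ : Sym2 V → ℕ) : Prop where
  eqOn : Set.EqOn χ c G.edgeSet
  rainbowOn : RainbowOn χ Gᶜ.edgeSet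

/-- Once `(G, c)` has been completed as far as `P`, adding `e` creates a rainbow copy of `H` through
`e`, whatever the colors of the added edges are. -/
def IsForced {W V : Type*} (H : SimpleGraph W) (G : SimpleGraph V) (c : Sym2 V → ℕ)
    (P : SimpleGraph V) (e : Sym2 V) : Prop :=
  ∀ χ, IsRainbowExtension G c χ → IsRainbowCopyThrough H (P ⊔ fromEdgeSet {e}) χ e

/-- `P` contains `G` and every edge that it forces: a stage at which the completion of `(G, c)` by
forced edges can get stuck. -/
structure IsForcingClosed {W V : Type*} (H : SimpleGraph W) (G : SimpleGraph V) (c : Sym2 V → ℕ)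
    (P : SimpleGraph V) : Prop where
  le : G ≤ P
  adj_of_isForced : ∀ ⦃u v⦄, u ≠ v → IsForced H G c P s(u, v) → P.Adj u v

/-- The completion of `(G, c)` by forced edges reaches the complete graph. This is weak rainbow
saturation without reference to an ordering of the non-edges. -/
def Percolates {W V : Type*} (H : SimpleGraph W) (G : SimpleGraph V) (c : Sym2 V → ℕ) : Prop :=
  ∀ P, IsForcingClosed H G c P → P = ⊤

/-- The edges of the list can be added to `P` one after the other, each being forced at the moment
it is added. -/
def IsForcedSeq {W V : Type*} (H : SimpleGraph W) (G : SimpleGraph V) (c : Sym2 V → ℕ) :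
    SimpleGraph V → List (Sym2 V) → Prop
  | _, [] => True
  | P, e :: L => IsForced H G c P e ∧ IsForcedSeq H G c (P ⊔ fromEdgeSet {e}) L

section Percolation

variable {W V : Type*} {H : SimpleGraph W} {G P Q : SimpleGraph V} {c χ : Sym2 V → ℕ}
  {e : Sym2 V} {L : List (Sym2 V)}

lemma IsRainbowCopyThrough.mono (h : IsRainbowCopyThrough H P c e) (hPQ : P ≤ Q)
    (hc : Set.EqOn c χ P.edgeSet) : IsRainbowCopyThrough H Q χ e := by
  obtain ⟨f, hf, hadj, hrainbow, he⟩ := h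
  refine ⟨f, hf, fun a b hab => hPQ (hadj hab), fun a b a' b' hab hab' heq => ?_, he⟩
  exact hrainbow hab hab' (by rw [hc (hadj hab), hc (hadj hab'), heq])

lemma IsForced.mono (h : IsForced H G c P e) (hPQ : P ≤ Q) : IsForced H G c Q e :=
  fun χ hχ => (h χ hχ).mono (sup_le_sup_right hPQ _) fun _ _ => rfl

lemma exists_map_eq_of_nodup {α β : Type*} [Inhabited β] {l : List α} (hl : l.Nodup) {l' : List β}
    (hlen : l'.length = l.length) : ∃ f : α → β, l.map f = l' := by
  classical
  refine ⟨fun a => l'.getD (l.idxOf a) default, ?_⟩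
  refine List.ext_getElem (by simp [hlen]) fun i hi hi' => ?_
  simp [hl.idxOf_getElem, hi']

lemma foldl_update_zip_map {α β : Type*} [DecidableEq α] (f g : α → β) (l : List α) :
    (l.zip (l.map f)).foldl (fun g p => Function.update g p.1 p.2) g =
      fun a => if a ∈ l then f a else g a := by
  induction l generalizing g with
  | nil => simp
  | cons b l ih =>
    funext a
    by_cases hab : a = b <;> simp [ih, hab]

lemma isForcedSeq_iff_getElem :
    IsForcedSeq H G c P L ↔
      ∀ i (hi : i < L.length), IsForced H G c (P ⊔ fromEdgeSet {e | e ∈ L.take i}) L[i] := by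
  induction L generalizing P with
  | nil => simp [IsForcedSeq]
  | cons e L ih =>
    have hstep (i : ℕ) : {e' | e' ∈ (e :: L).take (i + 1)} = insert e {e' | e' ∈ L.take i} := by
      ext
      simp
    simp only [IsForcedSeq, ih, List.length_cons, Nat.forall_lt_succ_left', hstep, Set.insert_eq,
      fromEdgeSet_union, sup_assoc, List.getElem_cons_zero, List.getElem_cons_succ, List.take_zero,
      List.not_mem_nil, Set.ofPred_false, fromEdgeSet_empty, sup_bot_eq]

lemma foldl_update_take_zip_map {α β : Type*} [DecidableEq α] (f g : α → β) (l : List α) (i : ℕ) :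
    ((l.zip (l.map f)).take i).foldl (fun g p => Function.update g p.1 p.2) g =
      fun a => if a ∈ l.take i then f a else g a := by
  rw [List.zip, List.take_zipWith, ← List.zip, ← List.map_take, foldl_update_zip_map]

lemma sup_fromEdgeSet_take_succ (G : SimpleGraph V) {i : ℕ} (hi : i < L.length) :
    G ⊔ fromEdgeSet {e | e ∈ L.take (i + 1)} =
      G ⊔ fromEdgeSet {e | e ∈ L.take i} ⊔ fromEdgeSet {L[i]} := by
  rw [sup_assoc, ← fromEdgeSet_union, List.take_succ_eq_append_getElem hi]
  simp only [List.mem_append, List.mem_singleton]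
  rfl

lemma weaklyRainbowSat_iff_isForcedSeq [DecidableEq V] :
    WeaklyRainbowSat H G c ↔
      ∃ L : List (Sym2 V), L.Nodup ∧ (∀ e, e ∈ L ↔ e ∈ Gᶜ.edgeSet) ∧ IsForcedSeq H G c G L := by
  simp only [isForcedSeq_iff_getElem]
  constructor
  · rintro ⟨L, hnodup, hmem, hsat⟩
    refine ⟨L, hnodup, hmem, fun i hi χ hχ => ?_⟩
    have hcolors : (L.map χ).Nodup := hnodup.map_on fun e he e' he' =>
      hχ.rainbowOn e ((hmem e).1 he) e' ((hmem e').1 he')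
    rw [← sup_fromEdgeSet_take_succ G hi]
    refine (hsat (L.map χ) (List.length_map χ) hcolors ⟨i, hi⟩).mono le_rfl fun e he => ?_
    rw [edgeSet_sup, edgeSet_fromEdgeSet] at he
    rw [foldl_update_take_zip_map]
    by_cases heL : e ∈ L.take (i + 1)
    · exact if_pos heL
    · exact (if_neg heL).trans (hχ.eqOn (he.resolve_right fun h => heL h.1)).symm
  · rintro ⟨L, hnodup, hmem, hforced⟩
    refine ⟨L, hnodup, hmem, fun cs hlen hcs i => ?_⟩
    obtain ⟨χ, rfl⟩ := exists_map_eq_of_nodup hnodup hlen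
    have hGL : ∀ e ∈ G.edgeSet, e ∉ L := fun e he heL =>
      (disjoint_edgeSet.2 disjoint_compl_right).notMem_of_mem_left he ((hmem e).1 heL)
    have hχ : IsRainbowExtension G c fun e => if e ∈ L then χ e else c e := by
      refine ⟨fun e he => if_neg (hGL e he), fun e he e' he' heq => ?_⟩
      rw [← hmem] at he he'
      simp only [he, he', if_true] at heq
      exact List.inj_on_of_nodup_map hcs he he' heq
    rw [sup_fromEdgeSet_take_succ G i.2]
    refine (hforced i i.2 _ hχ).mono le_rfl fun e he => ?_
    rw [← sup_fromEdgeSet_take_succ G i.2, edgeSet_sup, edgeSet_fromEdgeSet] at he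
    rw [foldl_update_take_zip_map]
    by_cases heL : e ∈ L.take (i + 1)
    · simp only [heL, List.mem_of_mem_take heL, if_true]
    · simp only [heL, hGL e (he.resolve_right fun h => heL h.1), if_false]

lemma IsForcedSeq.edgeSet_subset (hPQ : P ≤ Q) (hQ : IsForcingClosed H G c Q)
    (hL : IsForcedSeq H G c P L) : {e | e ∈ L ∧ ¬ e.IsDiag} ⊆ Q.edgeSet := by
  induction L generalizing P with
  | nil => simp
  | cons e L ih =>
    obtain ⟨he, hL⟩ := hL
    have heQ : ¬ e.IsDiag → e ∈ Q.edgeSet := by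
      induction e with
      | _ u v => exact fun huv => hQ.adj_of_isForced huv (he.mono hPQ)
    have hPeQ : P ⊔ fromEdgeSet {e} ≤ Q := by
      refine sup_le hPQ ?_
      rw [← edgeSet_subset_edgeSet, edgeSet_fromEdgeSet]
      rintro _ ⟨rfl, h⟩
      exact heQ h
    rintro e' ⟨he', hdiag⟩
    rcases List.mem_cons.1 he' with rfl | he'
    · exact heQ hdiag
    · exact ih hPeQ hL ⟨he', hdiag⟩

lemma Percolates.exists_isForcedSeq [Finite V] (h : Percolates H G c) (hP : G ≤ P) :
    ∃ L : List (Sym2 V), L.Nodup ∧ (∀ e, e ∈ L ↔ e ∈ Pᶜ.edgeSet) ∧ IsForcedSeq H G c P L := by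
  induction P using WellFoundedGT.induction with
  | _ P ih =>
  rcases eq_or_ne P ⊤ with rfl | hPtop
  · exact ⟨[], List.nodup_nil, by simp, trivial⟩
  obtain ⟨u, v, huv, hforced, hadj⟩ :
      ∃ u v, u ≠ v ∧ IsForced H G c P s(u, v) ∧ ¬ P.Adj u v := by
    by_contra! hclosed
    exact hPtop (h P ⟨hP, hclosed⟩)
  have hlt : P < P ⊔ fromEdgeSet {s(u, v)} :=
    left_lt_sup.2 fun hle => hadj (hle (by simpa using huv))
  obtain ⟨L, hnodup, hmem, hL⟩ := ih _ hlt (hP.trans le_sup_left)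
  have hmem' : ∀ e, e ∈ L ↔ e ∈ Pᶜ.edgeSet ∧ e ≠ s(u, v) := by
    intro e
    rw [hmem]
    induction e with
    | _ x y =>
      simp only [mem_edgeSet, compl_adj, sup_adj, fromEdgeSet_adj, Set.mem_singleton_iff]
      grind
  refine ⟨s(u, v) :: L, List.nodup_cons.2 ⟨fun hL => ((hmem' _).1 hL).2 rfl, hnodup⟩, fun e => ?_,
    hforced, hL⟩
  rw [List.mem_cons, hmem']
  by_cases he : e = s(u, v)
  · simp [he, huv, hadj]
  · simp [he]

theorem weaklyRainbowSat_iff_percolates [Finite V] [DecidableEq V] :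
    WeaklyRainbowSat H G c ↔ Percolates H G c := by
  rw [weaklyRainbowSat_iff_isForcedSeq]
  refine ⟨?_, fun h => h.exists_isForcedSeq le_rfl⟩
  rintro ⟨L, -, hmem, hL⟩ P hP
  refine eq_top_iff.2 fun u v huv => ?_
  by_cases hadj : G.Adj u v
  · exact hP.le hadj
  · exact hL.edgeSet_subset hP.le hP ⟨(hmem s(u, v)).2 ⟨huv, hadj⟩, huv⟩

end Percolation

section Forcing

variable {W V : Type*} {H : SimpleGraph W} {G P : SimpleGraph V} {c χ : Sym2 V → ℕ} {u v : V}

lemma RainbowOn.mono {S T : Set (Sym2 V)} (h : RainbowOn c T) (hST : S ⊆ T) : RainbowOn c S :=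
  fun e he e' he' => h e (hST he) e' (hST he')

open Classical in
lemma setValue_mem {α β : Type*} {K : Set β} {g : α ↪ β} (hg : ∀ x, g x ∈ K) (a : α) {b : β}
    (hb : b ∈ K) (x : α) : g.setValue a b x ∈ K := by
  change (if x = a then b else if g x = b then g a else g x) ∈ K
  split_ifs
  exacts [hb, hg a, hg x]

lemma isRainbowCopyThrough_of_isClique (hH : H.edgeSet.Nonempty) {K : Set V} (hK : P.IsClique K)
    (hu : u ∈ K) (hv : v ∈ K) (huv : u ≠ v) {g : W ↪ V} (hg : ∀ w, g w ∈ K)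
    (hχ : RainbowOn χ (P.edgeSet ∩ K.sym2)) : IsRainbowCopyThrough H P χ s(u, v) := by
  classical
  obtain ⟨⟨a, b⟩, hab : H.Adj a b⟩ := hH
  let f : W ↪ V := (g.setValue a u).setValue b v
  have hfa : f a = u := by
    rw [Function.Embedding.setValue_eq_of_ne hab.ne] <;> simp [huv]
  have hfb : f b = v := Function.Embedding.setValue_eq _ _ _
  have hfK : ∀ w, f w ∈ K := setValue_mem (setValue_mem hg a hu) b hv
  have hf : ∀ ⦃x y⦄, H.Adj x y → P.Adj (f x) (f y) := fun x y hxy =>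
    hK (hfK x) (hfK y) (f.injective.ne hxy.ne)
  refine ⟨f, f.injective, hf, fun x y x' y' hxy hxy' heq => ?_, a, b, hab, by rw [hfa, hfb]⟩
  exact Sym2.map.injective f.injective <|
    hχ s(f x, f y) ⟨hf hxy, hfK x, hfK y⟩ s(f x', f y') ⟨hf hxy', hfK x', hfK y'⟩ heq

lemma isClique_insert_insert {T : Set V} (hT : P.IsClique T) (huT : ∀ x ∈ T, P.Adj u x)
    (hvT : ∀ x ∈ T, P.Adj v x) :
    (P ⊔ fromEdgeSet {s(u, v)}).IsClique (insert u (insert v T)) := by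
  refine ((hT.mono le_sup_left).insert fun x hx _ => .inl (hvT x hx)).insert fun x hx hux => ?_
  rcases hx with rfl | hx
  · exact .inr ⟨rfl, hux⟩
  · exact .inl (huT x hx)

lemma edgeSet_sup_inter_sym2_subset {T : Set V} :
    (G ⊔ fromEdgeSet {s(u, v)}).edgeSet ∩ (insert u (insert v T)).sym2 ⊆
      insert s(u, v) {e ∈ G.edgeSet | ∃ x ∈ T, x ∈ e} := by
  rintro e ⟨he, heK⟩
  rw [edgeSet_sup, edgeSet_fromEdgeSet] at he
  refine or_iff_not_imp_left.2 fun heuv => ?_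
  have heG : e ∈ G.edgeSet := he.resolve_right fun h => heuv h.1
  refine ⟨heG, ?_⟩
  induction e with
  | _ x y =>
    have hne : x ≠ y := ((mem_edgeSet _).1 heG).ne
    simp only [Set.mk_mem_sym2_iff, Set.mem_insert_iff] at heK
    rw [Sym2.eq_iff] at heuv
    simp only [Sym2.mem_iff]
    grind

lemma isIndepSet_insert_insert {T : Set V} (hT : G.IsIndepSet T) (huv : ¬ G.Adj u v)
    (huT : ∀ x ∈ T, ¬ G.Adj u x) (hvT : ∀ x ∈ T, ¬ G.Adj v x) :
    G.IsIndepSet (insert u (insert v T)) := by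
  rw [← isClique_compl] at hT ⊢
  refine (hT.insert fun x hx hvx => ⟨hvx, hvT x hx⟩).insert fun x hx hux => ⟨hux, ?_⟩
  rcases hx with rfl | hx
  exacts [huv, huT x hx]

lemma IsForcingClosed.adj_of_isIndepSet (hH : H.edgeSet.Nonempty) (hP : IsForcingClosed H G c P)
    (huv : u ≠ v) {τ : W ↪ V} (hτ : P.IsClique (Set.range τ)) (huτ : ∀ w, P.Adj u (τ w))
    (hvτ : ∀ w, P.Adj v (τ w)) (hGτ : G.IsIndepSet (Set.range τ)) (hGu : ∀ w, ¬ G.Adj u (τ w))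
    (hGv : ∀ w, ¬ G.Adj v (τ w)) : P.Adj u v := by
  by_cases hGuv : G.Adj u v
  · exact hP.le hGuv
  have hindep := isIndepSet_insert_insert hGτ hGuv (Set.forall_mem_range.2 hGu)
    (Set.forall_mem_range.2 hGv)
  refine hP.adj_of_isForced huv fun χ hχ => isRainbowCopyThrough_of_isClique hH
    (isClique_insert_insert hτ (Set.forall_mem_range.2 huτ) (Set.forall_mem_range.2 hvτ))
    (.inl rfl) (.inr (.inl rfl)) huv (g := τ) (fun w => .inr (.inr ⟨w, rfl⟩))
    (hχ.rainbowOn.mono ?_)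
  rintro ⟨x, y⟩ ⟨hxy, hx, hy⟩
  have hne : x ≠ y := ((mem_edgeSet _).1 hxy).ne
  exact ⟨hne, hindep hx hy hne⟩

lemma exists_forall_mem_of_rainbowOn [Nonempty W] {τ : W → V}
    (hc : RainbowOn c {e | ∃ w, τ w ∈ e}) (k : ℕ) :
    ∃ w₀, ∀ e w, τ w ∈ e → c e = k → τ w₀ ∈ e := by
  by_cases h : ∃ e w, τ w ∈ e ∧ c e = k
  · obtain ⟨e, w₀, hw₀, rfl⟩ := h
    exact ⟨w₀, fun e' w hw heq => hc e' ⟨w, hw⟩ e ⟨w₀, hw₀⟩ heq ▸ hw₀⟩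
  · push Not at h
    exact ⟨Classical.arbitrary W, fun e w hw heq => absurd heq (h e w hw)⟩

lemma rainbowOn_insert_of_forall_ne {S : Set (Sym2 V)} {e : Sym2 V} (hS : RainbowOn c S)
    (he : ∀ e' ∈ S, c e' ≠ c e) : RainbowOn c (insert e S) := by
  rintro e₁ (rfl | h₁) e₂ (rfl | h₂) heq
  · rfl
  · exact absurd heq.symm (he _ h₂)
  · exact absurd heq (he _ h₁)
  · exact hS _ h₁ _ h₂ heq

lemma isForced_of_rainbowOn (hH : H.edgeSet.Nonempty) (huv : u ≠ v) {τ : W ↪ V}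
    (hτ : G.IsClique (Set.range τ)) (huτ : ∀ w, G.Adj u (τ w)) (hvτ : ∀ w, G.Adj v (τ w))
    (hc : RainbowOn c {e | ∃ w, τ w ∈ e}) : IsForced H G c G s(u, v) := by
  classical
  intro χ hχ
  have : Nonempty W := hH.elim fun e _ => ⟨e.out.1⟩
  obtain ⟨w₀, hw₀⟩ := exists_forall_mem_of_rainbowOn hc (χ s(u, v))
  set K : Set V := insert u (insert v (Set.range τ \ {τ w₀}))
  have hK : (G ⊔ fromEdgeSet {s(u, v)}).IsClique K :=
    isClique_insert_insert (hτ.subset Set.sdiff_subset)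
      (Set.forall_mem_range.2 huτ · ·.1) (Set.forall_mem_range.2 hvτ · ·.1)
  have hw₀K : τ w₀ ∉ K := by
    simp [K, (huτ w₀).ne', (hvτ w₀).ne']
  have hg (w : W) : τ.setValue w₀ u w ∈ K := by
    rcases eq_or_ne w w₀ with rfl | hw
    · exact .inl (Function.Embedding.setValue_eq _ _ _)
    · rw [Function.Embedding.setValue_eq_of_ne hw (huτ w).ne']
      exact .inr (.inr ⟨⟨w, rfl⟩, τ.injective.ne hw⟩)
  refine isRainbowCopyThrough_of_isClique hH hK (.inl rfl) (.inr (.inl rfl)) huv hg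
    (RainbowOn.mono (T := insert s(u, v) {e ∈ G.edgeSet | (∃ w, τ w ∈ e) ∧ τ w₀ ∉ e})
      (rainbowOn_insert_of_forall_ne ?_ ?_) ?_)
  · exact fun e he e' he' heq =>
      hc e he.2.1 e' he'.2.1 (by rwa [hχ.eqOn he.1, hχ.eqOn he'.1] at heq)
  · rintro e ⟨heG, ⟨w, hw⟩, hw₀e⟩ heq
    exact hw₀e (hw₀ e w hw ((hχ.eqOn heG).symm.trans heq))
  · rintro e ⟨he, heK⟩
    refine (edgeSet_sup_inter_sym2_subset ⟨he, heK⟩).imp_right ?_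
    rintro ⟨heG, _, ⟨⟨w, rfl⟩, -⟩, hw⟩
    exact ⟨heG, ⟨w, hw⟩, fun hw₀e => hw₀K (Set.mem_sym2_iff_subset.1 heK hw₀e)⟩

lemma IsForcingClosed.adj_of_rainbowOn (hH : H.edgeSet.Nonempty) (hP : IsForcingClosed H G c P)
    (huv : u ≠ v) {τ : W ↪ V} (hτ : G.IsClique (Set.range τ)) (huτ : ∀ w, G.Adj u (τ w))
    (hvτ : ∀ w, G.Adj v (τ w)) (hc : RainbowOn c {e | ∃ w, τ w ∈ e}) : P.Adj u v :=
  hP.adj_of_isForced huv ((isForced_of_rainbowOn hH huv hτ huτ hvτ hc).mono hP.le)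

variable {A : Type*} {a : A ↪ V}

lemma IsRainbowCopyThrough.map {Q : SimpleGraph A} {e : Sym2 A} (hQ : Q ≤ P.comap a)
    (h : IsRainbowCopyThrough H Q (χ ∘ Sym2.map a) e) :
    IsRainbowCopyThrough H P χ (e.map a) := by
  obtain ⟨f, hf, hadj, hrainbow, x, y, hxy, rfl⟩ := h
  exact ⟨a ∘ f, a.injective.comp hf, fun _ _ h => hQ (hadj h), hrainbow, x, y, hxy, rfl⟩

lemma IsRainbowExtension.comap (hχ : IsRainbowExtension G c χ) :
    IsRainbowExtension (G.comap a) (c ∘ Sym2.map a) (χ ∘ Sym2.map a) := by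
  constructor
  · rintro ⟨x, y⟩ hxy
    exact hχ.eqOn (x := s(a x, a y)) hxy
  · rintro ⟨x, y⟩ ⟨hne, hxy⟩ ⟨x', y'⟩ ⟨hne', hxy'⟩ heq
    exact Sym2.map.injective a.injective <| hχ.rainbowOn s(a x, a y) ⟨a.injective.ne hne, hxy⟩
      s(a x', a y') ⟨a.injective.ne hne', hxy'⟩ heq

lemma IsForcingClosed.comap (hP : IsForcingClosed H G c P) :
    IsForcingClosed H (G.comap a) (c ∘ Sym2.map a) (P.comap a) := by
  refine ⟨fun _ _ h => hP.le h, fun u v huv hforced => ?_⟩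
  refine hP.adj_of_isForced (a.injective.ne huv) fun χ hχ => (hforced _ hχ.comap).map ?_
  rintro x y (hxy | ⟨hxy, hne⟩)
  · exact .inl hxy
  · exact .inr ⟨congrArg (Sym2.map a) hxy, a.injective.ne hne⟩

lemma IsForcingClosed.isClique_range_of_percolates (hP : IsForcingClosed H G c P)
    (h : Percolates H (G.comap a) (c ∘ Sym2.map a)) : P.IsClique (Set.range a) := by
  have htop : P.comap a = ⊤ := h _ hP.comap
  rintro _ ⟨x, rfl⟩ _ ⟨y, rfl⟩ hxy
  exact htop.ge (ne_of_apply_ne a hxy)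

end Forcing

/-- The graph obtained from `G` by adding a clique with vertex set `κ` and joining its vertex `k` to
the vertices in `N k`. -/
def attachClique {V κ : Type*} (G : SimpleGraph V) (N : κ → Set V) : SimpleGraph (V ⊕ κ) where
  Adj
    | .inl u, .inl v => G.Adj u v
    | .inl v, .inr k => v ∈ N k
    | .inr k, .inl v => v ∈ N k
    | .inr k, .inr l => k ≠ l
  symm := ⟨by rintro (u | k) (v | l) h; exacts [h.symm, h, h, h.symm]⟩
  loopless := ⟨by rintro (u | k) h; exacts [G.irrefl h, h rfl]⟩

section AttachClique

variable {V κ : Type*} {G : SimpleGraph V} {N : κ → Set V}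

lemma attachClique_isClique_range_inr :
    (attachClique G N).IsClique (Set.range (Sum.inr : κ → V ⊕ κ)) := by
  rintro _ ⟨k, rfl⟩ _ ⟨l, rfl⟩ h
  exact fun hkl => h (congrArg _ hkl)

lemma ncard_edgeSet_attachClique_le [Finite V] [Finite κ] {U : Set V} (hN : ∀ k, N k ⊆ U) :
    (attachClique G N).edgeSet.ncard ≤
      G.edgeSet.ncard + Nat.card κ * (U.ncard + Nat.card κ) := by
  let T : Set (V ⊕ κ) := Sum.inl '' U ∪ Set.range Sum.inr
  let spoke : κ × (V ⊕ κ) → Sym2 (V ⊕ κ) := fun p => s(.inr p.1, p.2)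
  have hsub : (attachClique G N).edgeSet ⊆
      Sym2.map Sum.inl '' G.edgeSet ∪ spoke '' (Set.univ ×ˢ T) := by
    rintro ⟨u | k, v | l⟩ h
    · exact .inl ⟨s(u, v), h, rfl⟩
    · exact .inr ⟨(l, .inl u), ⟨trivial, .inl ⟨u, hN l h, rfl⟩⟩, Sym2.eq_swap⟩
    · exact .inr ⟨(k, .inl v), ⟨trivial, .inl ⟨v, hN k h, rfl⟩⟩, rfl⟩
    · exact .inr ⟨(k, .inr l), ⟨trivial, .inr ⟨l, rfl⟩⟩, rfl⟩
  have hT : T.ncard ≤ U.ncard + Nat.card κ := by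
    refine (Set.ncard_union_le _ _).trans (add_le_add (Set.ncard_image_le U.toFinite) ?_)
    rw [← Set.image_univ, ← Set.ncard_univ]
    exact Set.ncard_image_le Set.finite_univ
  calc (attachClique G N).edgeSet.ncard
      ≤ (Sym2.map Sum.inl '' G.edgeSet).ncard + (spoke '' (Set.univ ×ˢ T)).ncard :=
        (Set.ncard_le_ncard hsub).trans (Set.ncard_union_le _ _)
    _ ≤ G.edgeSet.ncard + (Set.univ ×ˢ T).ncard :=
        add_le_add (Set.ncard_image_le (Set.toFinite _)) (Set.ncard_image_le (Set.toFinite _))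
    _ ≤ G.edgeSet.ncard + Nat.card κ * (U.ncard + Nat.card κ) := by
        rw [Set.ncard_prod, Set.ncard_univ]
        gcongr

lemma exists_extension_injOn {α β : Type*} [Countable β] {i : α → β} (hi : i.Injective)
    (f : α → ℕ) : ∃ g : β → ℕ, g ∘ i = f ∧ Set.InjOn g (Set.range i)ᶜ := by
  obtain ⟨h, hh⟩ := exists_injective_nat β
  refine ⟨Function.extend i f h, funext fun a => hi.extend_apply f h a, fun b hb b' hb' heq => ?_⟩
  rw [Function.extend_apply' _ _ _ hb, Function.extend_apply' _ _ _ hb'] at heq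
  exact hh heq

lemma inr_notMem_map_inl {e : Sym2 V} {k : κ} : Sum.inr k ∉ e.map Sum.inl := fun h => by
  obtain ⟨v, -, hv⟩ := Sym2.mem_map.1 h
  cases hv

lemma exists_coloring_attachClique [Countable V] [Countable κ] (c : Sym2 V → ℕ) :
    ∃ c' : Sym2 (V ⊕ κ) → ℕ, c' ∘ Sym2.map Sum.inl = c ∧
      RainbowOn c' {e | ∃ k : κ, Sum.inr k ∈ e} := by
  have : Countable (Sym2 (V ⊕ κ)) := Quot.mk_surjective.countable
  obtain ⟨c', hc', hinj⟩ := exists_extension_injOn (β := Sym2 (V ⊕ κ))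
    (Sym2.map.injective Sum.inl_injective) c
  refine ⟨c', hc', RainbowOn.mono (fun e he e' he' => hinj he he') ?_⟩
  rintro _ ⟨k, hk⟩ ⟨e, rfl⟩
  exact inr_notMem_map_inl hk

lemma exists_coloring_sum {A B : Type*} (c₁ : Sym2 A → ℕ) (c₂ : Sym2 B → ℕ) :
    ∃ c : Sym2 (A ⊕ B) → ℕ, c ∘ Sym2.map Sum.inl = c₁ ∧ c ∘ Sym2.map Sum.inr = c₂ := by
  refine ⟨Function.extend (Sym2.map Sum.inl) c₁ (Function.extend (Sym2.map Sum.inr) c₂ 0),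
    funext fun e => (Sym2.map.injective Sum.inl_injective).extend_apply _ _ e, funext fun e => ?_⟩
  rw [Function.comp_apply, Function.extend_apply' _ _ _ ?_,
    (Sym2.map.injective Sum.inr_injective).extend_apply]
  rintro ⟨e', he'⟩
  exact inr_notMem_map_inl (he' ▸ Sym2.mem_map.2 ⟨_, e.out_fst_mem, rfl⟩)

end AttachClique

section Rwsat

variable {W V : Type*} {H : SimpleGraph W} {G : SimpleGraph V} {c : Sym2 V → ℕ}

lemma percolates_top : Percolates H (⊤ : SimpleGraph V) c :=
  fun _ hP => top_le_iff.1 hP.le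

lemma Percolates.comap_equiv {A : Type*} (h : Percolates H G c) (a : A ≃ V) :
    Percolates H (G.comap a) (c ∘ Sym2.map a) := by
  intro Q hQ
  have hclosed : IsForcingClosed H G c (Q.comap a.symm) := by
    simpa only [comap_comap, Equiv.coe_toEmbedding, Function.comp_assoc, ← Sym2.map_comp,
      Equiv.self_comp_symm, comap_id, Sym2.map_id, Function.comp_id] using
      hQ.comap (a := a.symm.toEmbedding)
  calc Q = (Q.comap a.symm).comap a := by
        rw [comap_comap, Equiv.symm_comp_self, comap_id]
    _ = ⊤ := by rw [h _ hclosed, comap_top a.injective]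

lemma exists_percolates_ncard_eq_rwsat (H : SimpleGraph W) (n : ℕ) :
    ∃ (G : SimpleGraph (Fin n)) (c : Sym2 (Fin n) → ℕ),
      Percolates H G c ∧ G.edgeSet.ncard = rwsat H n := by
  have hne : ({m | ∃ (G : SimpleGraph (Fin n)) (c : Sym2 (Fin n) → ℕ),
    WeaklyRainbowSat H G c ∧ G.edgeSet.ncard = m} ∪ {n.choose 2}).Nonempty := ⟨_, .inr rfl⟩
  rcases Nat.sInf_mem hne with ⟨G, c, hsat, hG⟩ | htop
  · exact ⟨G, c, weaklyRainbowSat_iff_percolates.1 hsat, hG⟩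
  · refine ⟨⊤, 0, percolates_top, Eq.trans ?_ htop.symm⟩
    rw [← coe_edgeFinset, Set.ncard_coe_finset, card_edgeFinset_top_eq_card_choose_two,
      Fintype.card_fin]

lemma rwsat_le_of_percolates [Finite V] (h : Percolates H G c) :
    rwsat H (Nat.card V) ≤ G.edgeSet.ncard := by
  let a := (Finite.equivFin V).symm
  refine Nat.sInf_le (.inl ⟨G.comap a, c ∘ Sym2.map a,
    weaklyRainbowSat_iff_percolates.2 (h.comap_equiv a), ?_⟩)
  exact Nat.card_congr (Iso.comap a G).mapEdgeSet

lemma percolates_attachClique_bot (hH : H.edgeSet.Nonempty) {c : Sym2 (V ⊕ W) → ℕ}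
    (hc : RainbowOn c {e | ∃ w : W, Sum.inr w ∈ e}) :
    Percolates H (attachClique (⊥ : SimpleGraph V) fun _ : W => Set.univ) c := by
  intro P hP
  refine top_le_iff.1 ?_
  rintro (u | w) (v | w') huv
  · exact hP.adj_of_rainbowOn hH huv (τ := .inr) attachClique_isClique_range_inr
      (fun _ => trivial) (fun _ => trivial) hc
  · exact hP.le trivial
  · exact hP.le trivial
  · exact hP.le fun h => huv (congrArg _ h)

lemma rwsat_le_card_mul [Finite W] (hH : H.edgeSet.Nonempty) (n : ℕ) :
    rwsat H n ≤ Nat.card W * n := by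
  rcases le_total n (Nat.card W) with hn | hn
  · calc rwsat H n ≤ n.choose 2 := Nat.sInf_le (.inr rfl)
      _ ≤ n * n := (Nat.choose_le_pow n 2).trans_eq (sq n)
      _ ≤ Nat.card W * n := Nat.mul_le_mul_right n hn
  · obtain ⟨c, -, hc⟩ :=
      exists_coloring_attachClique (κ := W) fun _ : Sym2 (Fin (n - Nat.card W)) => 0
    calc rwsat H n = rwsat H (Nat.card (Fin (n - Nat.card W) ⊕ W)) := by
          rw [Nat.card_sum, Nat.card_fin, Nat.sub_add_cancel hn]
      _ ≤ _ := rwsat_le_of_percolates (percolates_attachClique_bot hH hc)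
      _ ≤ _ := ncard_edgeSet_attachClique_le fun _ => Set.subset_univ _
      _ = Nat.card W * n := by
          rw [edgeSet_bot, Set.ncard_empty, Set.ncard_univ, Nat.card_fin, Nat.sub_add_cancel hn,
            zero_add]

end Rwsat

/-- The closed neighborhood `N[S]` of a set of vertices: `S` together with all neighbors of `S`. -/
def closedNbhd {V : Type*} (G : SimpleGraph V) (S : Set V) : Set V :=
  ⋃ v ∈ S, insert v (G.neighborSet v)

section SparseIndependentSets

variable {V : Type*} {G : SimpleGraph V} {S : Set V}

lemma subset_closedNbhd : S ⊆ closedNbhd G S :=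
  fun v hv => Set.mem_biUnion hv (Set.mem_insert v _)

lemma mem_closedNbhd_of_adj {u v : V} (hv : v ∈ S) (h : G.Adj u v) : u ∈ closedNbhd G S :=
  Set.mem_biUnion hv (.inr h.symm)

lemma exists_isIndepSet_ncard_closedNbhd_le [Finite V] {L : Set V} {d r : ℕ}
    (hL : ∀ v ∈ L, (G.neighborSet v).ncard ≤ d) (hr : r * (d + 1) ≤ L.ncard) :
    ∃ S ⊆ L, S.ncard = r ∧ G.IsIndepSet S ∧ (closedNbhd G S).ncard ≤ r * (d + 1) := by
  induction r with
  | zero => exact ⟨∅, Set.empty_subset L, by simp [closedNbhd]⟩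
  | succ r ih =>
    rw [Nat.succ_mul] at hr
    obtain ⟨S, hSL, hSr, hS, hSN⟩ := ih (by lia)
    obtain ⟨v, hvL, hv⟩ : ∃ v ∈ L, v ∉ closedNbhd G S :=
      Set.exists_mem_notMem_of_ncard_lt_ncard (by lia)
    refine ⟨insert v S, Set.insert_subset hvL hSL, ?_, ?_, ?_⟩
    · rw [Set.ncard_insert_of_notMem (fun h => hv (subset_closedNbhd h)), hSr]
    · rintro x (rfl | hx) y (rfl | hy) hne hadj
      · exact hne rfl
      · exact hv (mem_closedNbhd_of_adj hy hadj)
      · exact hv (mem_closedNbhd_of_adj hx hadj.symm)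
      · exact hS hx hy hne hadj
    · calc (closedNbhd G (insert v S)).ncard
          = (insert v (G.neighborSet v) ∪ closedNbhd G S).ncard := by
            rw [closedNbhd, Set.biUnion_insert, ← closedNbhd]
        _ ≤ ((G.neighborSet v).ncard + 1) + (closedNbhd G S).ncard :=
            (Set.ncard_union_le _ _).trans (by gcongr; exact Set.ncard_insert_le _ _)
        _ ≤ (r + 1) * (d + 1) := by
            have := hL v hvL
            lia

lemma card_le_two_mul_ncard_neighborSet_le [Finite V] {D : ℕ}
    (hG : G.edgeSet.ncard ≤ D * Nat.card V) :
    Nat.card V ≤ 2 * {v | (G.neighborSet v).ncard ≤ 4 * D}.ncard := by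
  classical
  have := Fintype.ofFinite V
  set low := {v | (G.neighborSet v).ncard ≤ 4 * D}
  have hmarkov : lowᶜ.ncard * (4 * D + 1) ≤ 2 * (D * Nat.card V) := by
    calc lowᶜ.ncard * (4 * D + 1) = ∑ v ∈ lowᶜ.toFinset, (4 * D + 1) := by
          rw [Finset.sum_const, Set.ncard_eq_toFinset_card', smul_eq_mul]
      _ ≤ ∑ v ∈ lowᶜ.toFinset, G.degree v := by
          refine Finset.sum_le_sum fun v hv => ?_
          have hv : ¬ (G.neighborSet v).ncard ≤ 4 * D := Set.mem_toFinset.1 hv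
          rwa [not_le, Set.ncard_eq_toFinset_card', ← neighborFinset_def,
            card_neighborFinset_eq_degree] at hv
      _ ≤ ∑ v, G.degree v := Finset.sum_le_univ_sum_of_nonneg fun _ => Nat.zero_le _
      _ = 2 * G.edgeSet.ncard := by
          rw [sum_degrees_eq_twice_card_edges, ← coe_edgeFinset, Set.ncard_coe_finset]
      _ ≤ 2 * (D * Nat.card V) := by gcongr
  have hhigh : 2 * lowᶜ.ncard ≤ Nat.card V := by
    refine Nat.le_of_mul_le_mul_right (c := 4 * D + 1) ?_ (Nat.succ_pos _)
    linarith
  linarith [Set.ncard_add_ncard_compl low]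

lemma exists_embedding_isIndepSet_range {ι : Type*} [Finite ι] [Finite V] {D : ℕ}
    (hG : G.edgeSet.ncard ≤ D * Nat.card V) (hV : 2 * (Nat.card ι * (4 * D + 1)) ≤ Nat.card V) :
    ∃ ρ : ι ↪ V, G.IsIndepSet (Set.range ρ) ∧
      (closedNbhd G (Set.range ρ)).ncard ≤ Nat.card ι * (4 * D + 1) := by
  obtain ⟨S, -, hcard, hS, hN⟩ := exists_isIndepSet_ncard_closedNbhd_le (G := G)
    (L := {v | (G.neighborSet v).ncard ≤ 4 * D}) (r := Nat.card ι) (fun _ hv => hv)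
    (by linarith [card_le_two_mul_ncard_neighborSet_le hG])
  obtain ⟨e⟩ : Nonempty (ι ≃ S) := Finite.card_eq.1 hcard.symm
  have hrange : Set.range (e.toEmbedding.trans (.subtype (· ∈ S))) = S :=
    (EquivLike.range_comp Subtype.val e).trans Subtype.range_coe
  exact ⟨e.toEmbedding.trans (.subtype _), by rwa [hrange], by rwa [hrange]⟩

end SparseIndependentSets

section Gluing

variable {W A B : Type*} {H : SimpleGraph W} {G₁ : SimpleGraph A} {G₂ : SimpleGraph B}
  {ρ : Bool × W ↪ A} {σ : W ↪ B}

/-- The disjoint union of `G₁` and `G₂` together with a clique on `Bool × W`, the *hub*, whose edges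
can be colored so as to force all missing edges. Hub vertices are joined to `N[ρ]` and `N[σ]`, but
those with first coordinate `i` not to the half `ρ (i, ·)` of `ρ`: that half can then force edges at
them as an independent set. -/
def glue (G₁ : SimpleGraph A) (G₂ : SimpleGraph B) (ρ : Bool × W ↪ A) (σ : W ↪ B) :
    SimpleGraph ((A ⊕ B) ⊕ Bool × W) :=
  attachClique (G₁ ⊕g G₂) fun k =>
    Sum.inl '' (closedNbhd G₁ (Set.range ρ) \ ρ '' {l | l.1 = k.1}) ∪
      Sum.inr '' closedNbhd G₂ (Set.range σ)

lemma glue_adj_inr_left {k : Bool × W} {x : A} :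
    (glue G₁ G₂ ρ σ).Adj (.inr k) (.inl (.inl x)) ↔
      x ∈ closedNbhd G₁ (Set.range ρ) ∧ x ∉ ρ '' {l | l.1 = k.1} := by
  simp [glue, attachClique]

lemma glue_adj_inr_right {k : Bool × W} {y : B} :
    (glue G₁ G₂ ρ σ).Adj (.inr k) (.inl (.inr y)) ↔ y ∈ closedNbhd G₂ (Set.range σ) := by
  simp [glue, attachClique]

lemma glue_adj_inr_inr {k l : Bool × W} :
    (glue G₁ G₂ ρ σ).Adj (.inr k) (.inr l) ↔ k ≠ l := Iff.rfl

lemma glue_not_adj_left_right {x : A} {y : B} :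
    ¬ (glue G₁ G₂ ρ σ).Adj (.inl (.inl x)) (.inl (.inr y)) :=
  not_adj_sum_inl_inr (G := G₁) (H := G₂) x y

/-- The hub vertices with first coordinate `i`. -/
abbrev hubHalf (A B : Type*) (i : Bool) : W ↪ (A ⊕ B) ⊕ Bool × W :=
  (Function.Embedding.sectR i W).trans .inr

/-- The half `ρ (i, ·)` of `ρ`, inside the glued graph. -/
abbrev leftHalf (B : Type*) (ρ : Bool × W ↪ A) (i : Bool) : W ↪ (A ⊕ B) ⊕ Bool × W :=
  (Function.Embedding.sectR i W).trans (ρ.trans (.trans .inl .inl))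

lemma isClique_range_hubHalf (i : Bool) :
    (glue G₁ G₂ ρ σ).IsClique (Set.range (hubHalf A B i)) :=
  attachClique_isClique_range_inr.subset (by rintro _ ⟨w, rfl⟩; exact ⟨_, rfl⟩)

lemma isIndepSet_range_leftHalf (hρ : G₁.IsIndepSet (Set.range ρ)) (i : Bool) :
    (glue G₁ G₂ ρ σ).IsIndepSet (Set.range (leftHalf B ρ i)) := by
  rintro _ ⟨w, rfl⟩ _ ⟨w', rfl⟩ h
  exact hρ ⟨(i, w), rfl⟩ ⟨(i, w'), rfl⟩ fun heq => h (congrArg (Sum.inl ∘ Sum.inl) heq)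

variable {c : Sym2 ((A ⊕ B) ⊕ Bool × W) → ℕ} {P : SimpleGraph ((A ⊕ B) ⊕ Bool × W)}
  (hH : H.edgeSet.Nonempty) (hP : IsForcingClosed H (glue G₁ G₂ ρ σ) c P)

include hH hP

lemma IsForcingClosed.glue_adj_left_right_of_mem_of_mem
    (hc : RainbowOn c {e | ∃ k : Bool × W, Sum.inr k ∈ e}) {x : A} {y : B}
    (hx : x ∈ closedNbhd G₁ (Set.range ρ)) (hy : y ∈ closedNbhd G₂ (Set.range σ)) :
    P.Adj (.inl (.inl x)) (.inl (.inr y)) := by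
  obtain ⟨i, hi⟩ : ∃ i : Bool, x ∉ ρ '' {l | l.1 = i} := by
    by_contra! h
    obtain ⟨k, hk, rfl⟩ := h true
    obtain ⟨l, hl, heq⟩ := h false
    exact Bool.false_ne_true (hl.symm.trans ((congrArg Prod.fst (ρ.injective heq)).trans hk))
  exact hP.adj_of_rainbowOn hH (by simp) (τ := hubHalf A B i) (isClique_range_hubHalf i)
    (fun w => (glue_adj_inr_left.2 ⟨hx, hi⟩).symm) (fun w => (glue_adj_inr_right.2 hy).symm)
    (hc.mono fun e ⟨w, hw⟩ => ⟨_, hw⟩)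

lemma IsForcingClosed.glue_adj_hub_left_of_mem
    (hc : RainbowOn c {e | ∃ k : Bool × W, Sum.inr k ∈ e}) {x : A}
    (hx : x ∈ closedNbhd G₁ (Set.range ρ)) (k : Bool × W) : P.Adj (.inr k) (.inl (.inl x)) := by
  by_cases hk : x ∈ ρ '' {l | l.1 = k.1}
  · obtain ⟨l, hl : l.1 = k.1, rfl⟩ := hk
    have hρl : ρ l ∉ ρ '' {m | m.1 = !k.1} := by
      rw [ρ.injective.mem_set_image]
      simp [hl]
    refine hP.adj_of_rainbowOn hH (by simp) (τ := hubHalf A B (!k.1)) (isClique_range_hubHalf _)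
      (fun w => glue_adj_inr_inr.2 fun h => ?_) (fun w => (glue_adj_inr_left.2 ⟨hx, hρl⟩).symm)
      (hc.mono fun e ⟨w, hw⟩ => ⟨_, hw⟩)
    exact Bool.not_ne_self _ (congrArg Prod.fst h).symm
  · exact hP.le (glue_adj_inr_left.2 ⟨hx, hk⟩)

lemma IsForcingClosed.glue_adj_left_right_of_mem (hσ : G₂.IsIndepSet (Set.range σ))
    (hc : RainbowOn c {e | ∃ k : Bool × W, Sum.inr k ∈ e})
    (hB : P.IsClique (Set.range fun y => .inl (.inr y)))
    {x : A} (hx : x ∈ closedNbhd G₁ (Set.range ρ)) (y : B) :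
    P.Adj (.inl (.inl x)) (.inl (.inr y)) := by
  by_cases hy : y ∈ closedNbhd G₂ (Set.range σ)
  · exact hP.glue_adj_left_right_of_mem_of_mem hH hc hx hy
  have hyσ (w : W) : y ≠ σ w := fun h => hy (h ▸ subset_closedNbhd ⟨w, rfl⟩)
  refine hP.adj_of_isIndepSet hH (by simp) (τ := σ.trans (.trans .inr .inl))
    (hB.subset (by rintro _ ⟨w, rfl⟩; exact ⟨_, rfl⟩))
    (fun w => hP.glue_adj_left_right_of_mem_of_mem hH hc hx (subset_closedNbhd ⟨w, rfl⟩))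
    (fun w => hB ⟨_, rfl⟩ ⟨_, rfl⟩ (by simpa using hyσ w)) ?_ (fun _ => glue_not_adj_left_right)
    (fun w h => hy (mem_closedNbhd_of_adj ⟨w, rfl⟩ h))
  rintro _ ⟨w, rfl⟩ _ ⟨w', rfl⟩ h
  exact hσ ⟨w, rfl⟩ ⟨w', rfl⟩ fun heq => h (congrArg (Sum.inl ∘ Sum.inr) heq)

lemma IsForcingClosed.glue_adj_left_right (hρ : G₁.IsIndepSet (Set.range ρ))
    (hσ : G₂.IsIndepSet (Set.range σ)) (hc : RainbowOn c {e | ∃ k : Bool × W, Sum.inr k ∈ e})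
    (hA : P.IsClique (Set.range fun x => .inl (.inl x)))
    (hB : P.IsClique (Set.range fun y => .inl (.inr y))) (x : A) (y : B) :
    P.Adj (.inl (.inl x)) (.inl (.inr y)) := by
  by_cases hx : x ∈ closedNbhd G₁ (Set.range ρ)
  · exact hP.glue_adj_left_right_of_mem hH hσ hc hB hx y
  have hxρ (k : Bool × W) : x ≠ ρ k := fun h => hx (h ▸ subset_closedNbhd ⟨k, rfl⟩)
  exact hP.adj_of_isIndepSet hH (by simp) (τ := leftHalf B ρ true)
    (hA.subset (by rintro _ ⟨w, rfl⟩; exact ⟨_, rfl⟩))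
    (fun w => hA ⟨_, rfl⟩ ⟨_, rfl⟩ (by simpa using hxρ (true, w)))
    (fun w => (hP.glue_adj_left_right_of_mem hH hσ hc hB (subset_closedNbhd ⟨_, rfl⟩) y).symm)
    (isIndepSet_range_leftHalf hρ true) (fun w h => hx (mem_closedNbhd_of_adj ⟨_, rfl⟩ h))
    (fun _ h => glue_not_adj_left_right h.symm)

lemma IsForcingClosed.glue_adj_hub_of_not_adj (hρ : G₁.IsIndepSet (Set.range ρ))
    (hc : RainbowOn c {e | ∃ k : Bool × W, Sum.inr k ∈ e})
    (hA : P.IsClique (Set.range fun x => .inl (.inl x))) (k : Bool × W) {v : A ⊕ B}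
    (hPv : ∀ w, P.Adj (.inl v) (leftHalf B ρ k.1 w))
    (hGv : ∀ w, ¬ (glue G₁ G₂ ρ σ).Adj (.inl v) (leftHalf B ρ k.1 w)) :
    P.Adj (.inr k) (.inl v) :=
  hP.adj_of_isIndepSet hH (by simp) (τ := leftHalf B ρ k.1)
    (hA.subset (by rintro _ ⟨w, rfl⟩; exact ⟨_, rfl⟩))
    (fun w => hP.glue_adj_hub_left_of_mem hH hc (subset_closedNbhd ⟨_, rfl⟩) k) hPv
    (isIndepSet_range_leftHalf hρ k.1)
    (fun w h => (glue_adj_inr_left.1 h).2 ⟨(k.1, w), rfl, rfl⟩) hGv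

lemma IsForcingClosed.glue_adj_hub (hρ : G₁.IsIndepSet (Set.range ρ))
    (hσ : G₂.IsIndepSet (Set.range σ)) (hc : RainbowOn c {e | ∃ k : Bool × W, Sum.inr k ∈ e})
    (hA : P.IsClique (Set.range fun x => .inl (.inl x)))
    (hB : P.IsClique (Set.range fun y => .inl (.inr y))) (k : Bool × W) (v : A ⊕ B) :
    P.Adj (.inr k) (.inl v) := by
  rcases v with x | y
  · by_cases hx : x ∈ closedNbhd G₁ (Set.range ρ)
    · exact hP.glue_adj_hub_left_of_mem hH hc hx k
    have hxρ (k : Bool × W) : x ≠ ρ k := fun h => hx (h ▸ subset_closedNbhd ⟨k, rfl⟩)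
    exact hP.glue_adj_hub_of_not_adj hH hρ hc hA k
      (fun w => hA ⟨_, rfl⟩ ⟨_, rfl⟩ (by simpa using hxρ (k.1, w)))
      fun w h => hx (mem_closedNbhd_of_adj ⟨_, rfl⟩ h)
  · exact hP.glue_adj_hub_of_not_adj hH hρ hc hA k
      (fun w => (hP.glue_adj_left_right hH hρ hσ hc hA hB _ y).symm) fun _ h =>
        glue_not_adj_left_right h.symm

omit hP

lemma percolates_glue (h₁ : Percolates H G₁ ((c ∘ Sym2.map Sum.inl) ∘ Sym2.map Sum.inl))
    (h₂ : Percolates H G₂ ((c ∘ Sym2.map Sum.inl) ∘ Sym2.map Sum.inr))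
    (hρ : G₁.IsIndepSet (Set.range ρ)) (hσ : G₂.IsIndepSet (Set.range σ))
    (hc : RainbowOn c {e | ∃ k : Bool × W, Sum.inr k ∈ e}) :
    Percolates H (glue G₁ G₂ ρ σ) c := by
  intro P hP
  rw [Function.comp_assoc, ← Sym2.map_comp] at h₁ h₂
  have hA : P.IsClique (Set.range fun x => .inl (.inl x)) :=
    hP.isClique_range_of_percolates (a := .trans .inl .inl) h₁
  have hB : P.IsClique (Set.range fun y => .inl (.inr y)) :=
    hP.isClique_range_of_percolates (a := .trans .inr .inl) h₂
  have hAB := hP.glue_adj_left_right hH hρ hσ hc hA hB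
  have hhub := hP.glue_adj_hub hH hρ hσ hc hA hB
  refine top_le_iff.1 ?_
  rintro ((x | y) | k) ((x' | y') | k') hne
  · exact hA ⟨x, rfl⟩ ⟨x', rfl⟩ hne
  · exact hAB x y'
  · exact (hhub k' _).symm
  · exact (hAB x' y).symm
  · exact hB ⟨y, rfl⟩ ⟨y', rfl⟩ hne
  · exact (hhub k' _).symm
  · exact hhub k _
  · exact hhub k _
  · exact hP.le (glue_adj_inr_inr.2 fun h => hne (congrArg _ h))

omit hH

lemma card_bool_prod : Nat.card (Bool × W) = 2 * Nat.card W := by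
  rw [Nat.card_prod, Nat.card_eq_fintype_card, Fintype.card_bool]

lemma ncard_edgeSet_sum [Finite A] [Finite B] :
    (G₁ ⊕g G₂).edgeSet.ncard = G₁.edgeSet.ncard + G₂.edgeSet.ncard :=
  (Nat.card_congr edgeSetSumEquiv).trans Nat.card_sum

lemma ncard_edgeSet_glue_le [Finite W] [Finite A] [Finite B] :
    (glue G₁ G₂ ρ σ).edgeSet.ncard ≤ G₁.edgeSet.ncard + G₂.edgeSet.ncard +
      2 * Nat.card W * ((closedNbhd G₁ (Set.range ρ)).ncard +
        (closedNbhd G₂ (Set.range σ)).ncard + 2 * Nat.card W) := by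
  set U : Set (A ⊕ B) :=
    Sum.inl '' closedNbhd G₁ (Set.range ρ) ∪ Sum.inr '' closedNbhd G₂ (Set.range σ)
  have hUcard : U.ncard ≤
      (closedNbhd G₁ (Set.range ρ)).ncard + (closedNbhd G₂ (Set.range σ)).ncard :=
    (Set.ncard_union_le _ _).trans
      (add_le_add (Set.ncard_image_le (Set.toFinite _)) (Set.ncard_image_le (Set.toFinite _)))
  refine (ncard_edgeSet_attachClique_le (U := U) fun k => ?_).trans ?_
  · exact Set.union_subset_union_left _ (Set.image_mono Set.sdiff_subset)
  · rw [ncard_edgeSet_sum, card_bool_prod]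
    gcongr

theorem exists_rwsat_add_add_le [Finite W] (hH : H.edgeSet.Nonempty) :
    ∃ N s C : ℕ, ∀ n ≥ N, ∀ m ≥ N, rwsat H (n + m + s) ≤ rwsat H n + rwsat H m + C := by
  set w := Nat.card W
  set r := w * (4 * w + 1) with hr
  refine ⟨2 * (2 * r), 2 * w, 2 * w * (2 * r + r + 2 * w), fun n hn m hm => ?_⟩
  obtain ⟨G₁, c₁, h₁, hG₁⟩ := exists_percolates_ncard_eq_rwsat H n
  obtain ⟨G₂, c₂, h₂, hG₂⟩ := exists_percolates_ncard_eq_rwsat H m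
  obtain ⟨ρ, hρ, hX⟩ := exists_embedding_isIndepSet_range (ι := Bool × W) (G := G₁) (D := w)
    (by rw [hG₁, Nat.card_fin]; exact rwsat_le_card_mul hH n)
    (by rw [card_bool_prod, Nat.card_fin]; linarith)
  obtain ⟨σ, hσ, hY⟩ := exists_embedding_isIndepSet_range (ι := W) (G := G₂) (D := w)
    (by rw [hG₂, Nat.card_fin]; exact rwsat_le_card_mul hH m)
    (by rw [Nat.card_fin]; linarith)
  obtain ⟨c₁₂, rfl, rfl⟩ := exists_coloring_sum c₁ c₂
  obtain ⟨c, rfl, hc⟩ := exists_coloring_attachClique (κ := Bool × W) c₁₂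
  calc rwsat H (n + m + 2 * w) = rwsat H (Nat.card ((Fin n ⊕ Fin m) ⊕ Bool × W)) := by
        rw [Nat.card_sum, Nat.card_sum, Nat.card_fin, Nat.card_fin, card_bool_prod]
    _ ≤ _ := rwsat_le_of_percolates (percolates_glue hH h₁ h₂ hρ hσ hc)
    _ ≤ _ := ncard_edgeSet_glue_le
    _ ≤ rwsat H n + rwsat H m + 2 * w * (2 * r + r + 2 * w) := by
        rw [hG₁, hG₂]
        gcongr
        rwa [card_bool_prod, mul_assoc] at hX

end Gluing

section AlmostSubadditive

open Filter Topology

variable {f : ℕ → ℝ} {C : ℝ} {N s : ℕ}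
  (hadd : ∀ n ≥ N, ∀ m ≥ N, f (n + m + s) ≤ f n + f m + C)

include hadd

lemma apply_mul_add_le {m r : ℕ} (hm : N ≤ m) (hr : N ≤ r) (k : ℕ) :
    f (k * (m + s) + r) ≤ k * (f m + C) + f r := by
  induction k with
  | zero => simp
  | succ k ih =>
    calc f ((k + 1) * (m + s) + r) = f (m + (k * (m + s) + r) + s) := by ring_nf
      _ ≤ f m + f (k * (m + s) + r) + C := hadd _ hm _ (hr.trans (Nat.le_add_left _ _))
      _ ≤ (k + 1 : ℕ) * (f m + C) + f r := by
        push_cast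
        linarith

variable (hf : ∀ n, 0 ≤ f n) (hC : 0 ≤ C)

include hf hC

lemma exists_le_mul_slope_add {m : ℕ} (hm : N ≤ m) (hm₀ : 0 < m) :
    ∃ M, ∀ n ≥ N, f n ≤ n * ((f m + C) / (m + s)) + M := by
  obtain ⟨M, hM⟩ := ((Set.finite_lt_nat (N + (m + s))).image f).bddAbove
  refine ⟨M, fun n hn => ?_⟩
  set q := (n - N) / (m + s)
  set r := N + (n - N) % (m + s)
  have hr : f r ≤ M :=
    hM ⟨r, Nat.add_lt_add_left (Nat.mod_lt _ (Nat.add_pos_left hm₀ s)) N, rfl⟩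
  have hqr : q * (m + s) + r = n := by
    have := Nat.div_add_mod' (n - N) (m + s)
    lia
  have hq : (q : ℝ) * (m + s) ≤ n := by
    exact_mod_cast hqr ▸ Nat.le_add_right _ r
  have hslope : 0 ≤ (f m + C) / (m + s) := by
    have := hf m
    positivity
  calc f n = f (q * (m + s) + r) := by rw [hqr]
    _ ≤ q * (f m + C) + f r := apply_mul_add_le hadd hm (Nat.le_add_right _ _) q
    _ = q * (m + s) * ((f m + C) / (m + s)) + f r := by field_simp
    _ ≤ n * ((f m + C) / (m + s)) + M := by gcongr

lemma eventually_div_lt_of_slope_lt {m : ℕ} (hm : N ≤ m) (hm₀ : 0 < m) {l : ℝ}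
    (hl : (f m + C) / (m + s) < l) : ∀ᶠ n : ℕ in atTop, f n / n < l := by
  obtain ⟨M, hM⟩ := exists_le_mul_slope_add hadd hf hC hm hm₀
  have hlim : Tendsto (fun n : ℕ => (f m + C) / (m + s) + M / n) atTop
      (𝓝 ((f m + C) / (m + s) + 0)) :=
    (tendsto_const_div_atTop_nhds_zero_nat M).const_add _
  rw [add_zero] at hlim
  filter_upwards [hlim.eventually_lt_const hl, eventually_ge_atTop N, eventually_gt_atTop 0]
    with n hn hNn hn₀
  refine lt_of_le_of_lt ?_ hn
  rw [div_le_iff₀ (by positivity), add_mul, div_mul_cancel₀ _ (by positivity), mul_comm]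
  exact hM n hNn

theorem exists_tendsto_div_of_add_add_le : ∃ L, Tendsto (fun n : ℕ => f n / n) atTop (𝓝 L) := by
  let slopes : Set ℝ := (fun m : ℕ => (f m + C) / (m + s)) '' {m | N ≤ m ∧ 0 < m}
  have hbdd : BddBelow slopes := by
    refine ⟨0, ?_⟩
    rintro _ ⟨m, -, rfl⟩
    have := hf m
    positivity
  have hne : slopes.Nonempty := ⟨_, N + 1, ⟨Nat.le_succ N, Nat.succ_pos N⟩, rfl⟩
  refine ⟨sInf slopes, tendsto_order.2 ⟨fun l hl => ?_, fun l hl => ?_⟩⟩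
  · have hlim : Tendsto (fun n : ℕ => sInf slopes - C / n) atTop (𝓝 (sInf slopes - 0)) :=
      (tendsto_const_div_atTop_nhds_zero_nat C).const_sub _
    rw [sub_zero] at hlim
    filter_upwards [hlim.eventually_const_lt hl, eventually_ge_atTop N, eventually_gt_atTop 0]
      with n hn hNn hn₀
    have hfn := hf n
    calc l < sInf slopes - C / n := hn
      _ ≤ (f n + C) / (n + s) - C / n := by
        gcongr
        exact csInf_le hbdd ⟨n, ⟨hNn, hn₀⟩, rfl⟩
      _ ≤ (f n + C) / n - C / n := by
        gcongr
        exact le_add_of_nonneg_right s.cast_nonneg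
      _ = f n / n := by ring
  · obtain ⟨_, ⟨m, ⟨hm, hm₀⟩, rfl⟩, hml⟩ := exists_lt_of_csInf_lt hne hl
    exact eventually_div_lt_of_slope_lt hadd hf hC hm hm₀ hml

end AlmostSubadditive

/-- For any non-empty graph `H`, the limit of `rwsat(n, H) / n` exists. -/
theorem rwsat_limit_exists {W : Type*} [Fintype W] (H : SimpleGraph W)
    (hH : H.edgeSet.Nonempty) :
    ∃ L : ℝ, Filter.Tendsto (fun n : ℕ => (rwsat H n : ℝ) / n)
      Filter.atTop (nhds L) := by
  obtain ⟨N, s, C, hadd⟩ := exists_rwsat_add_add_le hH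
  exact exists_tendsto_div_of_add_add_le (f := fun n => rwsat H n) (N := N) (s := s) (C := C)
    (fun n hn m hm => by exact_mod_cast hadd n hn m hm) (fun n => Nat.cast_nonneg _)
    (Nat.cast_nonneg C)
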